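/- Let κ = κ^{<κ} be uncountable, let γ ≤ κ⁺, and let θ₀, θ₁ > κ be regular cardinals. Then the challenger has a winning strategy in the filter game G_γ^{θ₀}(κ) if and only if he has one in G_γ^{θ₁}(κ); likewise for the judge. Hence the (strategic) γ-filter property does not depend on the choice of θ. -/

import Mathlib

universe u

open FirstOrder FirstOrder.Language ZFSet

/-- The relations of the language of set theory: a single binary relation `mem`. -/
inductive memRelType : ℕ → Type
  | mem : memRelType 2

/-- The first-order language of set theory, with a single binary relation `∈`. -/
def memLang : FirstOrder.Language :=
  ⟨fun _ => Empty, memRelType⟩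

/-- Any collection of ZFC sets is an `∈`-structure, via true membership. -/
instance zStruct (S : Set ZFSet.{u}) : memLang.Structure ↥S where
  funMap := fun f _ => f.elim
  RelMap := fun {n} r x =>
    match n, r, x with
    | _, memRelType.mem, x => (x 0 : ZFSet) ∈ (x 1 : ZFSet)

/-- The `i`-th (bound) variable as a term. -/
abbrev mvar {n : ℕ} (i : Fin n) : memLang.Term (Empty ⊕ Fin n) :=
  FirstOrder.Language.Term.var (Sum.inr i)

/-- The atomic membership formula `t ∈ u`. -/
def memF {n : ℕ} (t u : memLang.Term (Empty ⊕ Fin n)) : memLang.BoundedFormula Empty n :=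
  Relations.boundedFormula₂ memRelType.mem t u

/-- The axiom of extensionality. -/
def extAx : memLang.Sentence :=
  ∀' ∀' ((∀' ((memF (mvar 2) (mvar 0)) ⇔ (memF (mvar 2) (mvar 1)))) ⟹
    ((mvar 0) =' (mvar 1)))

/-- The empty set axiom. -/
def emptyAx : memLang.Sentence :=
  ∃' ∀' (∼ (memF (mvar 1) (mvar 0)))

/-- The pairing axiom. -/
def pairAx : memLang.Sentence :=
  ∀' ∀' ∃' ((memF (mvar 0) (mvar 2)) ⊓ (memF (mvar 1) (mvar 2)))

/-- The union axiom. -/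
def unionAx : memLang.Sentence :=
  ∀' ∃' ∀' ∀' (((memF (mvar 2) (mvar 3)) ⊓ (memF (mvar 3) (mvar 0))) ⟹
    (memF (mvar 2) (mvar 1)))

/-- The axiom of infinity. -/
def infAx : memLang.Sentence :=
  ∃' ((∃' ((memF (mvar 1) (mvar 0)) ⊓ ∀' (∼ (memF (mvar 2) (mvar 1))))) ⊓
    (∀' ((memF (mvar 1) (mvar 0)) ⟹
      ∃' ((memF (mvar 2) (mvar 0)) ⊓
        ∀' ((memF (mvar 3) (mvar 2)) ⇔
          ((memF (mvar 3) (mvar 1)) ⊔ ((mvar 3) =' (mvar 1))))))))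

/-- The foundation axiom. -/
def foundAx : memLang.Sentence :=
  ∀' ((∃' (memF (mvar 1) (mvar 0))) ⟹
    ∃' ((memF (mvar 1) (mvar 0)) ⊓
      ∀' (∼ ((memF (mvar 2) (mvar 0)) ⊓ (memF (mvar 2) (mvar 1))))))

/-- The axiom of choice, in the form: every family of nonempty pairwise disjoint sets
admits a selector. -/
def choiceAx : memLang.Sentence :=
  ∀' (((∀' ((memF (mvar 1) (mvar 0)) ⟹ ∃' (memF (mvar 2) (mvar 1)))) ⊓
      (∀' ∀' (((memF (mvar 1) (mvar 0)) ⊓ (memF (mvar 2) (mvar 0)) ⊓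
          (∼ ((mvar 1) =' (mvar 2)))) ⟹
        ∼ (∃' ((memF (mvar 3) (mvar 1)) ⊓ (memF (mvar 3) (mvar 2))))))) ⟹
    ∃' ∀' ((memF (mvar 2) (mvar 0)) ⟹
      ∃' ((memF (mvar 3) (mvar 2)) ⊓ (memF (mvar 3) (mvar 1)) ⊓
        ∀' (((memF (mvar 4) (mvar 2)) ⊓ (memF (mvar 4) (mvar 1))) ⟹
          ((mvar 4) =' (mvar 3))))))

/-- The separation axiom for the formula `φ(p₀,…,p_{n-1}, x)`. -/
def sepAx (n : ℕ) (φ : memLang.BoundedFormula Empty (n + 1)) : memLang.Sentence :=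
  (∀' (∃' (∀' ((memF (mvar ⟨n + 2, by omega⟩) (mvar ⟨n + 1, by omega⟩)) ⇔
    ((memF (mvar ⟨n + 2, by omega⟩) (mvar ⟨n, by omega⟩)) ⊓
      (φ.liftAt 2 n)))))).alls

/-- The collection axiom for the formula `φ(p₀,…,p_{n-1}, x, y)`. -/
def collAx (n : ℕ) (φ : memLang.BoundedFormula Empty (n + 2)) : memLang.Sentence :=
  (∀' ((∀' ((memF (mvar ⟨n + 1, by omega⟩) (mvar ⟨n, by omega⟩)) ⟹
        ∃' (φ.liftAt 1 n))) ⟹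
      (∃' (∀' ((memF (mvar ⟨n + 2, by omega⟩) (mvar ⟨n, by omega⟩)) ⟹
        ∃' ((memF (mvar ⟨n + 3, by omega⟩) (mvar ⟨n + 1, by omega⟩)) ⊓
          (φ.liftAt 2 n))))))).alls

/-- The power set axiom. -/
def powAx : memLang.Sentence :=
  ∀' ∃' ∀' ((∀' ((memF (mvar 3) (mvar 2)) ⟹ (memF (mvar 3) (mvar 0)))) ⟹
    (memF (mvar 2) (mvar 1)))

/-- The theory `ZFC⁻`: ZFC without the power set axiom, with collection. -/
def ZFCminus : memLang.Theory :=
  {extAx, emptyAx, pairAx, unionAx, infAx, foundAx, choiceAx} ∪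
    (⋃ n : ℕ, Set.range (sepAx n)) ∪ (⋃ n : ℕ, Set.range (collAx n))

/-- The theory `ZFC`. -/
def ZFCfull : memLang.Theory := insert powAx ZFCminus

/-- `S` is an elementary substructure of `T` with respect to the membership relation. -/
def ElemSub (S T : Set ZFSet.{u}) : Prop :=
  ∃ h : S ⊆ T, ∀ (n : ℕ) (φ : memLang.BoundedFormula Empty n) (x : Fin n → ↥S),
    φ.Realize Empty.elim x ↔
      φ.Realize Empty.elim (fun i => (⟨(x i : ZFSet), h (x i).2⟩ : ↥T))

/-- `j : S → T` is an elementary embedding of `∈`-structures. -/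
def ElemEmbOf (S T : Set ZFSet.{u}) (j : ↥S → ↥T) : Prop :=
  ∀ (n : ℕ) (φ : memLang.BoundedFormula Empty n) (x : Fin n → ↥S),
    φ.Realize Empty.elim x ↔ φ.Realize Empty.elim (j ∘ x)
/-- The cardinality of a ZFC set. -/
noncomputable def zcard (x : ZFSet.{u}) : Cardinal.{u + 1} := Cardinal.mk x.toSet

/-- `θ` is (the von Neumann representation of) a regular cardinal. -/
def IsRegCard (θ : ZFSet.{u}) : Prop :=
  θ.IsOrdinal ∧ (zcard θ).IsRegular ∧ ∀ x ∈ θ, zcard x < zcard θ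

/-- `κ` is (the von Neumann representation of) a cardinal. -/
def IsCardZ (κ : ZFSet.{u}) : Prop :=
  κ.IsOrdinal ∧ ∀ x ∈ κ, zcard x < zcard κ

/-- The collection `H(θ)` of sets hereditarily of cardinality less than `θ`. -/
def HZ (θ : ZFSet.{u}) : Set ZFSet.{u} :=
  {x | ZFSet.Hereditarily (fun y => zcard y < zcard θ) x}

/-- The collection `H(κ⁺)` of sets hereditarily of cardinality at most `κ`. -/
def Hplus (κ : ZFSet.{u}) : Set ZFSet.{u} :=
  {x | ZFSet.Hereditarily (fun y => zcard y ≤ zcard κ) x}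

/-- `f` codes a bijection from `a` onto `b`. -/
def IsBijZ (a b f : ZFSet.{u}) : Prop :=
  ZFSet.IsFunc a b f ∧ (∀ x₁ x₂ y, ZFSet.pair x₁ y ∈ f → ZFSet.pair x₂ y ∈ f → x₁ = x₂) ∧
    ∀ y ∈ b, ∃ x, ZFSet.pair x y ∈ f

/-- `f` codes an injection from `a` into `b`. -/
def IsInjZ (a b f : ZFSet.{u}) : Prop :=
  ZFSet.IsFunc a b f ∧ ∀ x₁ x₂ y, ZFSet.pair x₁ y ∈ f → ZFSet.pair x₂ y ∈ f → x₁ = x₂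

-- Part C : models
/-- A weak `κ`-model: a set `M` of size `κ` with `κ + 1 ⊆ M` satisfying `ZFC⁻`. -/
def WeakModelZ (κ : ZFSet.{u}) (M : Set ZFSet.{u}) : Prop :=
  Cardinal.mk ↥M = zcard κ ∧ insert κ κ.toSet ⊆ M ∧ (↥M ⊨ ZFCminus)

/-- `M` is closed under `<α`-sequences (of sets, with domains ordinals `< α`). -/
def LtClosed (α : ZFSet.{u}) (M : Set ZFSet.{u}) : Prop :=
  ∀ δ y f : ZFSet, δ ∈ α → y.toSet ⊆ M → ZFSet.IsFunc δ y f → f ∈ M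

/-- A `κ`-model: a weak `κ`-model closed under `<κ`-sequences. -/
def KappaModelZ (κ : ZFSet.{u}) (M : Set ZFSet.{u}) : Prop :=
  WeakModelZ κ M ∧ LtClosed κ M

/-- `j : S → T` has critical point `κ`. -/
def CritAt (S T : Set ZFSet.{u}) (j : ↥S → ↥T) (κ : ZFSet.{u}) : Prop :=
  ∃ hκ : κ ∈ S, (∀ x : ↥S, (x : ZFSet) ∈ κ → ((j x : ZFSet) = (x : ZFSet))) ∧
    (j ⟨κ, hκ⟩ : ZFSet) ≠ κ

/-- `j : S → T` is `κ`-powerset preserving: it has critical point `κ` and `S` and `T`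
have the same subsets of `κ`. -/
def PPres (κ : ZFSet.{u}) (S T : Set ZFSet.{u}) (j : ↥S → ↥T) : Prop :=
  CritAt S T j κ ∧ ∀ A : ZFSet, A ⊆ κ → (A ∈ S ↔ A ∈ T)

-- Part D : filters
/-- A filter on `κ` (in the sense of Holy–Schlicht): a collection of subsets of `κ` all of
whose finite intersections have cardinality `κ`. -/
def IsZFilter (κ : ZFSet.{u}) (F : Set ZFSet.{u}) : Prop :=
  (∀ A ∈ F, A ⊆ κ) ∧ ∀ (n : ℕ) (A : Fin n → ZFSet),
    (∀ i, A i ∈ F) → Cardinal.mk ↥(κ.toSet ∩ ⋂ i, (A i).toSet) = zcard κ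

/-- The diagonal intersection of a `κ`-sequence of subsets of `κ` coded by the
set-function `m`. -/
noncomputable def diagZ (κ m : ZFSet.{u}) : ZFSet.{u} :=
  ZFSet.sep (fun b => ∀ a v, a ∈ b → ZFSet.pair a v ∈ m → b ∈ v) κ

/-- `m` codes a `κ`-sequence of elements of `F`. -/
def CodesFilterSeq (κ : ZFSet.{u}) (F : Set ZFSet.{u}) (m : ZFSet.{u}) : Prop :=
  (∃ y, ZFSet.IsFunc κ y m) ∧ ∀ b v, b ∈ κ → ZFSet.pair b v ∈ m → v ∈ F

/-- `F` is an `M`-normal filter on `κ`: it measures `P(κ) ∩ M` and is closed under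
diagonal intersections of `κ`-sequences of its elements lying in `M`. -/
def MNormalZ (κ : ZFSet.{u}) (F : Set ZFSet.{u}) (M : Set ZFSet.{u}) : Prop :=
  IsZFilter κ F ∧ (∀ A : ZFSet, A ∈ M → A ⊆ κ → (A ∈ F ∨ (κ \ A) ∈ F)) ∧
    ∀ m ∈ M, CodesFilterSeq κ F m → diagZ κ m ∈ F

/-- `U` is weakly amenable for `M`: traces of `U` on `κ`-sized elements of `M` are in `M`. -/
def WeaklyAmenableZ (κ : ZFSet.{u}) (M : Set ZFSet.{u}) (U : Set ZFSet.{u}) : Prop :=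
  ∀ A : ZFSet, A ∈ M → zcard A ≤ zcard κ →
    ∃ B ∈ M, ∀ z : ZFSet, z ∈ B ↔ (z ∈ A ∧ z ∈ U)

/-- The domain of the ultrapower of `M` by a filter on `κ`: functions with domain `κ`
lying in `M`. -/
def UltFn (κ : ZFSet.{u}) (M : Set ZFSet.{u}) : Set ZFSet.{u} :=
  {f | f ∈ M ∧ ∃ y, ZFSet.IsFunc κ y f}

/-- The membership relation of the ultrapower of `M` by `U`. -/
noncomputable def UltMem (κ : ZFSet.{u}) (U : Set ZFSet.{u}) (f g : ZFSet.{u}) : Prop :=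
  ZFSet.sep (fun a => ∃ v w, ZFSet.pair a v ∈ f ∧ ZFSet.pair a w ∈ g ∧ v ∈ w) κ ∈ U

/-- The ultrapower of `M` by `U` is well-founded. -/
noncomputable def WellFoundedUlt (κ : ZFSet.{u}) (M : Set ZFSet.{u}) (U : Set ZFSet.{u}) : Prop :=
  WellFounded (fun f g : ↥(UltFn κ M) => UltMem κ U (f : ZFSet) (g : ZFSet))
-- Part E : the filter games G_γ^θ(κ)
/-- `m` codes the sequence `⟨g b | b ∈ d⟩` of `κ`-sized collections of sets. -/
def CodesSetSeq (m d : ZFSet.{u}) (g : ZFSet.{u} → Set ZFSet.{u}) : Prop :=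
  (∃ y, ZFSet.IsFunc d y m) ∧ ∀ b v, b ∈ d → ZFSet.pair b v ∈ m → v.toSet = g b

open Classical in
/-- The restriction of a play to the moves of index `< i`. -/
noncomputable def restrLt (g : ZFSet.{u} → Set ZFSet.{u}) (i : ZFSet.{u}) :
    ZFSet.{u} → Set ZFSet.{u} :=
  fun b => if b ∈ i then g b else ∅

open Classical in
/-- The restriction of a play to the moves of index `≤ i`. -/
noncomputable def restrLe (g : ZFSet.{u} → Set ZFSet.{u}) (i : ZFSet.{u}) :
    ZFSet.{u} → Set ZFSet.{u} :=
  fun b => if (b ∈ i ∨ b = i) then g b else ∅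

/-- The challenger's move at stage `i` of `G_γ^θ(κ)` is legal: he plays a `κ`-model
`M_i ≺ H(θ)` containing (codes for) the sequences of previous models and filter traces,
increasing the chain of models. -/
def ChalLegalAt (κ θ : ZFSet.{u}) (Ms Fs : ZFSet.{u} → Set ZFSet.{u}) (i : ZFSet.{u}) : Prop :=
  (∀ j, j ∈ i → Ms j ⊆ Ms i) ∧ KappaModelZ κ (Ms i) ∧ ElemSub (Ms i) (HZ θ) ∧
    (∃ m ∈ Ms i, CodesSetSeq m i Ms) ∧
    (∃ f ∈ Ms i, CodesSetSeq f i (fun b => Fs b ∩ Ms b))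

/-- The judge's move at stage `i` of `G_γ^θ(κ)` is legal: she plays a filter `F_i` on `κ`
measuring `P(κ) ∩ M_i` and extending her previous filters. -/
def JudgeLegalAt (κ : ZFSet.{u}) (Ms Fs : ZFSet.{u} → Set ZFSet.{u}) (i : ZFSet.{u}) : Prop :=
  IsZFilter κ (Fs i) ∧ (∀ A : ZFSet, A ∈ Ms i → A ⊆ κ → (A ∈ Fs i ∨ (κ \ A) ∈ Fs i)) ∧
    ∀ j, j ∈ i → Fs j ⊆ Fs i

/-- The winning condition for the judge in `G_γ^θ(κ)`: the union of the filters played is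
normal for the union of the models played. -/
def JudgeWinsRun (κ γ : ZFSet.{u}) (Ms Fs : ZFSet.{u} → Set ZFSet.{u}) : Prop :=
  MNormalZ κ (⋃ i ∈ γ.toSet, Fs i) (⋃ i ∈ γ.toSet, Ms i)

/-- `σ` is a winning strategy for the challenger in the game `G_γ^θ(κ)`. -/
noncomputable def ChalWS (κ θ γ : ZFSet.{u})
    (σ : ZFSet.{u} → (ZFSet.{u} → Set ZFSet.{u}) → Set ZFSet.{u}) : Prop :=
  ∀ Fs : ZFSet.{u} → Set ZFSet.{u},
    (∀ i ∈ γ.toSet, (∀ j, j ∈ i → JudgeLegalAt κ (fun b => σ b (restrLt Fs b)) Fs j) →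
      ChalLegalAt κ θ (fun b => σ b (restrLt Fs b)) Fs i) ∧
    ((∀ i ∈ γ.toSet, JudgeLegalAt κ (fun b => σ b (restrLt Fs b)) Fs i) →
      ¬ JudgeWinsRun κ γ (fun b => σ b (restrLt Fs b)) Fs)

/-- `τ` is a winning strategy for the judge in the game `G_γ^θ(κ)`. -/
noncomputable def JudgeWS (κ θ γ : ZFSet.{u})
    (τ : ZFSet.{u} → (ZFSet.{u} → Set ZFSet.{u}) → Set ZFSet.{u}) : Prop :=
  ∀ Ms : ZFSet.{u} → Set ZFSet.{u},
    (∀ i ∈ γ.toSet,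
      (∀ j, (j ∈ i ∨ j = i) → ChalLegalAt κ θ Ms (fun b => τ b (restrLe Ms b)) j) →
      JudgeLegalAt κ Ms (fun b => τ b (restrLe Ms b)) i) ∧
    ((∀ i ∈ γ.toSet, ChalLegalAt κ θ Ms (fun b => τ b (restrLe Ms b)) i) →
      JudgeWinsRun κ γ Ms (fun b => τ b (restrLe Ms b)))

/-- `κ` has the `γ`-filter property: for every regular `θ > κ`, the challenger has no
winning strategy in `G_γ^θ(κ)`. -/
noncomputable def FilterPropZ (κ γ : ZFSet.{u}) : Prop :=
  ∀ θ : ZFSet.{u}, IsRegCard θ → κ ∈ θ → ¬ ∃ σ, ChalWS κ θ γ σ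

/-- `κ` has the strategic `γ`-filter property: for every regular `θ > κ`, the judge has a
winning strategy in `G_γ^θ(κ)`. -/
noncomputable def StratFilterPropZ (κ γ : ZFSet.{u}) : Prop :=
  ∀ θ : ZFSet.{u}, IsRegCard θ → κ ∈ θ → ∃ τ, JudgeWS κ θ γ τ

/-- `κ` is `α`-Ramsey (Holy–Schlicht, Definition 5.1): for arbitrarily large regular
cardinals `θ`, every `A ⊆ κ` is contained, as an element, in some weak `κ`-model
`M ≺ H(θ)` closed under `<α`-sequences, for which there exists a `κ`-powerset preserving
elementary embedding `j : M → N`. -/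
def AlphaRamseyZ (α κ : ZFSet.{u}) : Prop :=
  ∀ η : ZFSet.{u}, ∃ θ : ZFSet.{u}, η ∈ θ ∧ IsRegCard θ ∧ ∀ A : ZFSet, A ⊆ κ →
    ∃ M : Set ZFSet.{u}, A ∈ M ∧ WeakModelZ κ M ∧ LtClosed α M ∧ ElemSub M (HZ θ) ∧
      ∃ (N : Set ZFSet.{u}) (j : ↥M → ↥N), ElemEmbOf M N j ∧ PPres κ M N j

theorem mem_toSet_iff' {x z : ZFSet.{u}} : z ∈ x.toSet ↔ z ∈ x := Iff.rfl

/-- Any collection of sets not larger than a set is a set. -/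
theorem exists_zset (S : Set ZFSet.{u}) (θ : ZFSet.{u}) (h : Cardinal.mk S ≤ zcard θ) :
    ∃ x : ZFSet.{u}, x.toSet = S := by
  obtain ⟨f⟩ := h
  have : Small.{u} θ.toSet := ZFSet.small_coe θ
  have : Small.{u} S := small_of_injective f.injective
  refine ⟨ZFSet.range (fun s : S => (s : ZFSet.{u})), ?_⟩
  ext z
  rw [mem_toSet_iff', ZFSet.mem_range]
  simp

theorem mem_HZ {θ x : ZFSet.{u}} : x ∈ HZ θ ↔ zcard x < zcard θ ∧ ∀ y ∈ x, y ∈ HZ θ := by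
  show ZFSet.Hereditarily _ _ ↔ _
  rw [ZFSet.hereditarily_iff]; rfl

theorem mem_Hplus {θ x : ZFSet.{u}} : x ∈ Hplus θ ↔ zcard x ≤ zcard θ ∧ ∀ y ∈ x, y ∈ Hplus θ := by
  show ZFSet.Hereditarily _ _ ↔ _
  rw [ZFSet.hereditarily_iff]; rfl

theorem HZ_trans {θ x y : ZFSet.{u}} (h : x ∈ HZ θ) (hy : y ∈ x) : y ∈ HZ θ := (mem_HZ.1 h).2 y hy

theorem zcard_mono {x y : ZFSet.{u}} (h : x ⊆ y) : zcard x ≤ zcard y :=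
  Cardinal.mk_le_mk_of_subset (fun _ hz => h hz)

theorem HZ_of_set {θ : ZFSet.{u}} (S : Set ZFSet.{u}) (hS : S ⊆ HZ θ)
    (hc : Cardinal.mk S < zcard θ) : ∃ x ∈ HZ θ, x.toSet = S := by
  obtain ⟨x, hx⟩ := exists_zset S θ hc.le
  refine ⟨x, mem_HZ.2 ⟨?_, fun y hy => hS ?_⟩, hx⟩
  · rw [zcard, hx]; exact hc
  · rw [← hx]; exact hy

theorem HZ_subset {θ x y : ZFSet.{u}} (h : y ∈ HZ θ) (hxy : x ⊆ y) : x ∈ HZ θ :=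
  mem_HZ.2 ⟨(zcard_mono hxy).trans_lt (mem_HZ.1 h).1, fun z hz => HZ_trans h (hxy hz)⟩

theorem HZ_of_transitive {θ i : ZFSet.{u}} (ht : i.IsTransitive) (hc : zcard i < zcard θ) :
    i ∈ HZ θ := by
  have : ∀ x : ZFSet.{u}, x ⊆ i → x ∈ HZ θ := by
    intro x
    induction x using ZFSet.inductionOn with
    | _ x ih =>
      intro hx
      exact mem_HZ.2 ⟨(zcard_mono hx).trans_lt hc, fun y hy => ih y hy (ht y (hx hy))⟩
  exact this i (fun _ h => h)

theorem Hplus_of_subset_transitive {κ x : ZFSet.{u}} (ht : κ.IsTransitive) (hx : x ⊆ κ) :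
    x ∈ Hplus κ := by
  induction x using ZFSet.inductionOn with
  | _ x ih => exact mem_Hplus.2 ⟨zcard_mono hx, fun y hy => ih y hy (ht y (hx hy))⟩

theorem Hplus_subset_HZ {κ θ : ZFSet.{u}} (h : zcard κ < zcard θ) : Hplus κ ⊆ HZ θ := by
  intro x
  induction x using ZFSet.inductionOn with
  | _ x ih =>
    intro hx
    rw [mem_Hplus] at hx
    exact mem_HZ.2 ⟨hx.1.trans_lt h, fun y hy => ih y hy (hx.2 y hy)⟩

theorem zcard_pair_le (a b : ZFSet.{u}) : zcard ({a, b} : ZFSet.{u}) < Cardinal.aleph0 := by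
  have : ({a, b} : ZFSet.{u}).toSet = ({a, b} : Set ZFSet.{u}) := by
    ext z; rw [mem_toSet_iff']; simp
  rw [zcard, this]
  exact Cardinal.mk_lt_aleph0_iff.2 (Set.toFinite _).to_subtype

theorem zcard_singleton_le (a : ZFSet.{u}) : zcard ({a} : ZFSet.{u}) < Cardinal.aleph0 := by
  have : ({a} : ZFSet.{u}).toSet = ({a} : Set ZFSet.{u}) := by
    ext z; rw [mem_toSet_iff']; simp
  rw [zcard, this]
  exact Cardinal.mk_lt_aleph0_iff.2 (Set.toFinite _).to_subtype

theorem HZ_unordered {θ a b : ZFSet.{u}} (hθ : Cardinal.aleph0 ≤ zcard θ) (ha : a ∈ HZ θ)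
    (hb : b ∈ HZ θ) : ({a, b} : ZFSet.{u}) ∈ HZ θ := by
  refine mem_HZ.2 ⟨(zcard_pair_le a b).trans_le hθ, ?_⟩
  intro y hy
  rcases ZFSet.mem_pair.1 hy with rfl | rfl <;> assumption

theorem HZ_pair {θ a b : ZFSet.{u}} (hθ : Cardinal.aleph0 ≤ zcard θ) (ha : a ∈ HZ θ)
    (hb : b ∈ HZ θ) : ZFSet.pair a b ∈ HZ θ := by
  refine HZ_unordered hθ ?_ (HZ_unordered hθ ha hb)
  refine mem_HZ.2 ⟨(zcard_singleton_le a).trans_le hθ, ?_⟩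
  intro y hy
  rw [ZFSet.mem_singleton] at hy
  rwa [hy]

theorem Hplus_unordered {κ a b : ZFSet.{u}} (hθ : Cardinal.aleph0 ≤ zcard κ) (ha : a ∈ Hplus κ)
    (hb : b ∈ Hplus κ) : ({a, b} : ZFSet.{u}) ∈ Hplus κ := by
  refine mem_Hplus.2 ⟨((zcard_pair_le a b).trans_le hθ).le, ?_⟩
  intro y hy
  rcases ZFSet.mem_pair.1 hy with rfl | rfl <;> assumption

theorem Hplus_pair {κ a b : ZFSet.{u}} (hθ : Cardinal.aleph0 ≤ zcard κ) (ha : a ∈ Hplus κ)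
    (hb : b ∈ Hplus κ) : ZFSet.pair a b ∈ Hplus κ := by
  refine Hplus_unordered hθ ?_ (Hplus_unordered hθ ha hb)
  refine mem_Hplus.2 ⟨((zcard_singleton_le a).trans_le hθ).le, ?_⟩
  intro y hy
  rw [ZFSet.mem_singleton] at hy
  rwa [hy]

/-- The graph of a function on a small set, as an element of `H(θ)`. -/
theorem exists_graph {θ d : ZFSet.{u}} (hθ : Cardinal.aleph0 ≤ zcard θ) (hd : d ∈ HZ θ)
    (g : ZFSet.{u} → ZFSet.{u}) (hg : ∀ b ∈ d, g b ∈ HZ θ) :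
    ∃ m ∈ HZ θ, (∃ y, ZFSet.IsFunc d y m ∧ ∀ z ∈ y, ∃ b ∈ d, z = g b) ∧
      ∀ b v, ZFSet.pair b v ∈ m ↔ b ∈ d ∧ v = g b := by
  have hdc := (mem_HZ.1 hd).1
  obtain ⟨m, hm, hm'⟩ := HZ_of_set (θ := θ) ((fun b => ZFSet.pair b (g b)) '' d.toSet)
    (by rintro _ ⟨b, hb, rfl⟩; exact HZ_pair hθ (HZ_trans hd hb) (hg b hb))
    (Cardinal.mk_image_le.trans_lt hdc)
  obtain ⟨y, -, hy'⟩ := HZ_of_set (θ := θ) (g '' d.toSet)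
    (by rintro _ ⟨b, hb, rfl⟩; exact hg b hb)
    (Cardinal.mk_image_le.trans_lt hdc)
  have key : ∀ z, z ∈ m ↔ ∃ b ∈ d, ZFSet.pair b (g b) = z := by
    intro z; rw [← mem_toSet_iff', hm']; rfl
  have keyy : ∀ z, z ∈ y ↔ ∃ b ∈ d, g b = z := by
    intro z; rw [← mem_toSet_iff', hy']; rfl
  have key2 : ∀ b v, ZFSet.pair b v ∈ m ↔ b ∈ d ∧ v = g b := by
    intro b v
    rw [key]
    constructor
    · rintro ⟨c, hc, h⟩
      rw [ZFSet.pair_inj] at h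
      obtain ⟨rfl, rfl⟩ := h
      exact ⟨hc, rfl⟩
    · rintro ⟨hb, rfl⟩
      exact ⟨b, hb, rfl⟩
  refine ⟨m, hm, ⟨y, ⟨?_, ?_⟩, ?_⟩, key2⟩
  · intro z hz
    obtain ⟨b, hb, rfl⟩ := (key z).1 hz
    exact ZFSet.pair_mem_prod.2 ⟨hb, (keyy _).2 ⟨b, hb, rfl⟩⟩
  · intro b hb
    exact ⟨g b, (key2 _ _).2 ⟨hb, rfl⟩, fun v hv => ((key2 _ _).1 hv).2⟩
  · intro z hz
    obtain ⟨b, hb, rfl⟩ := (keyy z).1 hz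
    exact ⟨b, hb, rfl⟩

theorem IsFunc_ext {d y₁ y₂ f₁ f₂ : ZFSet.{u}} (h₁ : ZFSet.IsFunc d y₁ f₁)
    (h₂ : ZFSet.IsFunc d y₂ f₂)
    (h : ∀ b ∈ d, ∀ v, ZFSet.pair b v ∈ f₁ → ZFSet.pair b v ∈ f₂) : f₁ = f₂ := by
  ext z
  constructor
  · intro hz
    obtain ⟨a, ha, b, hb, rfl⟩ := ZFSet.mem_prod.1 (h₁.1 hz)
    exact h a ha b hz
  · intro hz
    obtain ⟨a, ha, b, hb, rfl⟩ := ZFSet.mem_prod.1 (h₂.1 hz)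
    obtain ⟨c, hc, -⟩ := h₁.2 a ha
    have : b = c := (h₂.2 a ha).unique hz (h a ha c hc)
    rwa [this]

/-! Transfer of normality along covering of `H(κ⁺)`. -/

theorem codes_mem_Hplus {κ m : ZFSet.{u}} {F : Set ZFSet.{u}} (hκ : IsCardZ κ)
    (hunc : Cardinal.aleph0 < zcard κ) (hF : ∀ A ∈ F, A ⊆ κ) (h : CodesFilterSeq κ F m) :
    m ∈ Hplus κ := by
  obtain ⟨⟨y, hy⟩, hv⟩ := h
  have hz : ∀ z ∈ m, ∃ b ∈ κ, ∃ v, z = ZFSet.pair b v := by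
    intro z hz
    obtain ⟨b, hb, v, -, rfl⟩ := ZFSet.mem_prod.1 (hy.1 hz)
    exact ⟨b, hb, v, rfl⟩
  choose! p hp q hq using hz
  refine mem_Hplus.2 ⟨?_, ?_⟩
  · refine Cardinal.mk_le_of_injective (f := fun z : m.toSet => (⟨p z, hp z z.2⟩ : κ.toSet)) ?_
    rintro ⟨a, ha⟩ ⟨b, hb⟩ hab
    have hab : p a = p b := congrArg Subtype.val hab
    have ha' := ha
    have hb' := hb
    rw [mem_toSet_iff', hq a ha] at ha'
    rw [mem_toSet_iff', hq b hb, ← hab] at hb'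
    apply Subtype.ext
    show a = b
    rw [hq a ha, hq b hb, (hy.2 _ (hp a ha)).unique ha' hb', hab]
  · intro z hz
    have h1 := hp z hz
    have h2 := hz
    rw [hq z hz] at h2
    rw [hq z hz]
    exact Hplus_pair hunc.le (Hplus_of_subset_transitive hκ.1.isTransitive (hκ.1.isTransitive _ h1))
      (Hplus_of_subset_transitive hκ.1.isTransitive (hF _ (hv _ _ h1 h2)))

theorem MNormalZ_transfer {κ : ZFSet.{u}} {F M M' : Set ZFSet.{u}} (hκ : IsCardZ κ)
    (hunc : Cardinal.aleph0 < zcard κ) (hM : M ∩ Hplus κ ⊆ M') (h : MNormalZ κ F M') :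
    MNormalZ κ F M :=
  ⟨h.1, fun A hA hAκ => h.2.1 A
      (hM ⟨hA, Hplus_of_subset_transitive hκ.1.isTransitive hAκ⟩) hAκ,
    fun m hm hc => h.2.2 m (hM ⟨hm, codes_mem_Hplus hκ hunc h.1.1 hc⟩) hc⟩

theorem JudgeLegal_transfer {κ i : ZFSet.{u}} {Ms Ms' Fs Fs' : ZFSet.{u} → Set ZFSet.{u}}
    (hκ : IsCardZ κ) (hM : Ms i ∩ Hplus κ ⊆ Ms' i) (hF : ∀ j, j ∈ i ∨ j = i → Fs j = Fs' j)
    (h : JudgeLegalAt κ Ms' Fs' i) :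
    JudgeLegalAt κ Ms Fs i := by
  have hi := hF i (Or.inr rfl)
  refine ⟨hi ▸ h.1, fun A hA hAκ => ?_, fun j hj => ?_⟩
  · rw [hi]
    exact h.2.1 A (hM ⟨hA, Hplus_of_subset_transitive hκ.1.isTransitive hAκ⟩) hAκ
  · rw [hi, hF j (Or.inl hj)]
    exact h.2.2 j hj

/-- A legal play of the challenger up to and including stage `i` forces `|i| ≤ κ`. -/
theorem zcard_le_of_legal {κ θ i : ZFSet.{u}} {Ms Fs : ZFSet.{u} → Set ZFSet.{u}}
    (h : ∀ j, (j ∈ i ∨ j = i) → ChalLegalAt κ θ Ms Fs j) : zcard i ≤ zcard κ := by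
  have hi := h i (Or.inr rfl)
  rw [← hi.2.1.1.1]
  have : ∀ j ∈ i, ∃ m ∈ Ms i, CodesSetSeq m j Ms := by
    intro j hj
    obtain ⟨m, hm, hc⟩ := (h j (Or.inl hj)).2.2.2.1
    exact ⟨m, hi.1 j hj hm, hc⟩
  choose! m hm hc using this
  refine Cardinal.mk_le_of_injective (f := fun z : i.toSet => (⟨m z, hm z z.2⟩ : Ms i)) ?_
  have aux : ∀ a ∈ i, ∀ b ∈ i, m a = m b → a ⊆ b := by
    intro a ha b hb hab x hx
    obtain ⟨y, hy⟩ := (hc a ha).1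
    obtain ⟨y', hy'⟩ := (hc b hb).1
    obtain ⟨w, hw, -⟩ := hy.2 x hx
    rw [hab] at hw
    exact (ZFSet.pair_mem_prod.1 (hy'.1 hw)).1
  rintro ⟨a, ha⟩ ⟨b, hb⟩ hab
  have hab : m a = m b := congrArg Subtype.val hab
  apply Subtype.ext
  show a = b
  ext z
  exact ⟨fun hz => aux a ha b hb hab hz, fun hz => aux b hb a ha hab.symm hz⟩

theorem realize_memF {S : Set ZFSet.{u}} {n : ℕ} (i j : Fin n)
    (v : Empty → ↥S) (xs : Fin n → ↥S) :
    (memF (mvar i) (mvar j)).Realize v xs ↔ (xs i : ZFSet.{u}) ∈ (xs j : ZFSet.{u}) := by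
  exact BoundedFormula.realize_rel₂ (L := memLang) (R := (memRelType.mem : memLang.Relations 2))

theorem realize_eqF {S : Set ZFSet.{u}} {n : ℕ} (i j : Fin n)
    (v : Empty → ↥S) (xs : Fin n → ↥S) :
    ((mvar i : memLang.Term (Empty ⊕ Fin n)) =' (mvar j)).Realize v xs ↔ xs i = xs j := by
  rw [BoundedFormula.realize_bdEqual]
  rfl

theorem HZ_ext (θ : ZFSet.{u}) : (↥(HZ θ)) ⊨ extAx := by
  show BoundedFormula.Realize _ _ _
  simp only [extAx, BoundedFormula.realize_all, BoundedFormula.realize_imp,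
    BoundedFormula.realize_iff, realize_memF, realize_eqF]
  simp [Fin.snoc]
  intro a ha b hb h
  ext z
  constructor
  · intro hz; exact (h z (HZ_trans ha hz)).1 hz
  · intro hz; exact (h z (HZ_trans hb hz)).2 hz

theorem HZ_empty {θ : ZFSet.{u}} (hθ : Cardinal.aleph0 ≤ zcard θ) : (∅ : ZFSet.{u}) ∈ HZ θ := by
  obtain ⟨x, hx, h⟩ := HZ_of_set (θ := θ) ∅ (by simp)
    (by simpa using Cardinal.aleph0_pos.trans_le hθ)
  have : x = ∅ := by
    ext z; rw [← mem_toSet_iff', h]; simp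
  rwa [← this]

theorem HZ_emptyAx {θ : ZFSet.{u}} (hθ : Cardinal.aleph0 ≤ zcard θ) : (↥(HZ θ)) ⊨ emptyAx := by
  show BoundedFormula.Realize _ _ _
  simp only [emptyAx, BoundedFormula.realize_all, BoundedFormula.realize_ex,
    BoundedFormula.realize_not, realize_memF]
  simp [Fin.snoc]
  exact ⟨∅, HZ_empty hθ, fun a _ => ZFSet.notMem_empty a⟩

theorem HZ_pairAx {θ : ZFSet.{u}} (hθ : Cardinal.aleph0 ≤ zcard θ) : (↥(HZ θ)) ⊨ pairAx := by
  show BoundedFormula.Realize _ _ _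
  simp only [pairAx, BoundedFormula.realize_all, BoundedFormula.realize_ex,
    BoundedFormula.realize_inf, realize_memF]
  simp [Fin.snoc]
  intro a ha b hb
  exact ⟨{a, b}, by simp, HZ_unordered hθ ha hb, by simp⟩

theorem HZ_sUnion {θ a : ZFSet.{u}} (hθ : (zcard θ).IsRegular) (ha : a ∈ HZ θ) :
    (⋃₀ a : ZFSet.{u}) ∈ HZ θ := by
  refine mem_HZ.2 ⟨?_, ?_⟩
  · have : (⋃₀ a : ZFSet.{u}).toSet = ⋃ x : a.toSet, (x : ZFSet.{u}).toSet := by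
      ext z
      rw [mem_toSet_iff', ZFSet.mem_sUnion, Set.mem_iUnion]
      simp [mem_toSet_iff']
    rw [zcard, this, Cardinal.card_iUnion_lt_iff_forall_of_isRegular hθ (mem_HZ.1 ha).1]
    exact fun i => (mem_HZ.1 (HZ_trans ha i.2)).1
  · intro y hy
    obtain ⟨z, hz, hyz⟩ := ZFSet.mem_sUnion.1 hy
    exact HZ_trans (HZ_trans ha hz) hyz

theorem HZ_unionAx {θ : ZFSet.{u}} (hθ : (zcard θ).IsRegular) : (↥(HZ θ)) ⊨ unionAx := by
  show BoundedFormula.Realize _ _ _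
  simp only [unionAx, BoundedFormula.realize_all, BoundedFormula.realize_ex,
    BoundedFormula.realize_inf, BoundedFormula.realize_imp, realize_memF]
  simp [Fin.snoc]
  intro a ha
  exact ⟨⋃₀ a, HZ_sUnion hθ ha, fun x _ y _ hxy hya => ZFSet.mem_sUnion.2 ⟨y, hya, hxy⟩⟩

/-- The finite von Neumann ordinals. -/
noncomputable def finOrd : ℕ → ZFSet.{u}
  | 0 => ∅
  | n + 1 => insert (finOrd n) (finOrd n)

theorem HZ_insert {θ a : ZFSet.{u}} (hθ : Cardinal.aleph0 ≤ zcard θ) (ha : a ∈ HZ θ) :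
    insert a a ∈ HZ θ := by
  obtain ⟨x, hx, h⟩ := HZ_of_set (θ := θ) (insert a a.toSet)
    (by
      rintro z (rfl | hz)
      · exact ha
      · exact HZ_trans ha hz)
    (by
      refine (Cardinal.mk_insert_le).trans_lt ?_
      exact Cardinal.add_lt_of_lt hθ (mem_HZ.1 ha).1 (Cardinal.one_lt_aleph0.trans_le hθ))
  have : x = insert a a := by
    ext z; rw [← mem_toSet_iff', h, ZFSet.mem_insert_iff]; rfl
  rwa [← this]

theorem HZ_infAx {θ : ZFSet.{u}} (hθ : Cardinal.aleph0 < zcard θ) : (↥(HZ θ)) ⊨ infAx := by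
  show BoundedFormula.Realize _ _ _
  simp only [infAx, BoundedFormula.realize_all, BoundedFormula.realize_ex,
    BoundedFormula.realize_inf, BoundedFormula.realize_sup, BoundedFormula.realize_iff,
    BoundedFormula.realize_not, BoundedFormula.realize_imp, realize_memF, realize_eqF]
  simp [Fin.snoc]
  have hf : ∀ n, finOrd n ∈ HZ θ := by
    intro n
    induction n with
    | zero => exact HZ_empty hθ.le
    | succ n ih => exact HZ_insert hθ.le ih
  obtain ⟨x, hx, h⟩ := HZ_of_set (θ := θ) (Set.range finOrd)
    (by rintro _ ⟨n, rfl⟩; exact hf n)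
    ((Cardinal.mk_le_aleph0_iff.2 (Set.countable_range _).to_subtype).trans_lt hθ)
  have h' : ∀ z, z ∈ x ↔ ∃ n, finOrd n = z := by
    intro z; rw [← mem_toSet_iff', h]; rfl
  refine ⟨x, ⟨∅, (h' _).2 ⟨0, rfl⟩, HZ_empty hθ.le, fun a _ => ZFSet.notMem_empty a⟩, hx, ?_⟩
  intro a ha hax
  obtain ⟨n, rfl⟩ := (h' _).1 hax
  refine ⟨finOrd (n + 1), (h' _).2 ⟨n + 1, rfl⟩, hf _, fun b _ => ?_⟩
  rw [finOrd, ZFSet.mem_insert_iff, or_comm]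

theorem HZ_foundAx (θ : ZFSet.{u}) : (↥(HZ θ)) ⊨ foundAx := by
  show BoundedFormula.Realize _ _ _
  simp only [foundAx, BoundedFormula.realize_all, BoundedFormula.realize_ex,
    BoundedFormula.realize_inf, 
    BoundedFormula.realize_not, BoundedFormula.realize_imp, realize_memF]
  simp [Fin.snoc]
  intro a ha b hb hba
  obtain ⟨y, hy, h⟩ := ZFSet.regularity a (by rintro rfl; exact ZFSet.notMem_empty _ hba)
  refine ⟨y, hy, HZ_trans ha hy, fun z hz hza hzy => ?_⟩
  have : z ∈ a ∩ y := ZFSet.mem_inter.2 ⟨hza, hzy⟩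
  rw [h] at this
  exact ZFSet.notMem_empty _ this

theorem HZ_choiceAx {θ : ZFSet.{u}} : (↥(HZ θ)) ⊨ choiceAx := by
  show BoundedFormula.Realize _ _ _
  simp only [choiceAx, BoundedFormula.realize_all, BoundedFormula.realize_ex,
    BoundedFormula.realize_inf, realize_eqF,
    BoundedFormula.realize_not, BoundedFormula.realize_imp, realize_memF]
  simp [Fin.snoc]
  intro a ha h1 h2
  have h1' : ∀ x ∈ a, ∃ y, y ∈ x := by
    intro x hx
    obtain ⟨y, hy, hyx⟩ := h1 x (HZ_trans ha hx) hx
    exact ⟨y, by assumption⟩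
  choose! c hc using h1'
  obtain ⟨C, hC, h⟩ := HZ_of_set (θ := θ) (c '' a.toSet)
    (by rintro _ ⟨x, hx, rfl⟩; exact HZ_trans (HZ_trans ha hx) (hc x hx))
    (Cardinal.mk_image_le.trans_lt (mem_HZ.1 ha).1)
  have h' : ∀ z, z ∈ C ↔ ∃ x ∈ a, c x = z := by
    intro z; rw [← mem_toSet_iff', h]; rfl
  refine ⟨C, hC, fun x hx hxa => 
    ⟨c x, ⟨hc x hxa, (h' _).2 ⟨x, hxa, rfl⟩⟩, HZ_trans hx (hc x hxa), ?_⟩⟩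
  intro y hy hyx hyC
  obtain ⟨x', hx', rfl⟩ := (h' _).1 hyC
  by_contra hne
  have : x ≠ x' := by rintro rfl; exact hne rfl
  exact h2 x hx x' (HZ_trans ha hx') hxa hx' this _ hyx hy (hc x' hx')

theorem HZ_sepAx {θ : ZFSet.{u}} (n : ℕ) (φ : memLang.BoundedFormula Empty (n + 1)) :
    (↥(HZ θ)) ⊨ sepAx n φ := by
  rw [sepAx, Sentence.Realize, BoundedFormula.realize_alls]
  intro xs
  simp only [BoundedFormula.realize_all, BoundedFormula.realize_ex,
    BoundedFormula.realize_inf, BoundedFormula.realize_iff, realize_memF]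
  intro a
  set P : ZFSet.{u} → Prop := fun z => ∃ hz : z ∈ HZ θ,
    φ.Realize (default : Empty → ↥(HZ θ)) (Fin.snoc xs ⟨z, hz⟩) with hP
  refine ⟨⟨ZFSet.sep P a, HZ_subset a.2 ZFSet.sep_subset⟩, fun x => ?_⟩
  have e : ∀ b : ↥(HZ θ), (φ.liftAt 2 n).Realize (default : Empty → ↥(HZ θ))
      (Fin.snoc (Fin.snoc (Fin.snoc xs a) b) x : Fin (n + 1 + 2) → ↥(HZ θ)) ↔ φ.Realize (default : Empty → ↥(HZ θ)) (Fin.snoc xs x) := by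
    intro b
    rw [BoundedFormula.realize_liftAt (by omega)]
    apply iff_of_eq
    congr 1
    funext i
    refine Fin.lastCases ?_ (fun i => ?_) i
    · simp [Fin.snoc]
    · simp [Fin.snoc]
      rw [dif_pos (by omega)]
      rfl
  have := e ⟨ZFSet.sep P a, HZ_subset a.2 ZFSet.sep_subset⟩
  refine Iff.trans ?_ (and_congr_right fun _ => this.symm)
  simp [Fin.snoc]
  intro _
  simp [hP]

theorem HZ_collAx {θ : ZFSet.{u}} (n : ℕ) (φ : memLang.BoundedFormula Empty (n + 2)) :
    (↥(HZ θ)) ⊨ collAx n φ := by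
  rw [collAx, Sentence.Realize, BoundedFormula.realize_alls]
  intro xs
  simp only [BoundedFormula.realize_all, BoundedFormula.realize_ex, BoundedFormula.realize_imp,
    BoundedFormula.realize_inf, realize_memF]
  intro a
  set R : ↥(HZ θ) → ↥(HZ θ) → Prop := fun x y =>
    φ.Realize (default : Empty → ↥(HZ θ)) (Fin.snoc (Fin.snoc xs x) y) with hR
  have e1 : ∀ x y : ↥(HZ θ), (φ.liftAt 1 n).Realize (default : Empty → ↥(HZ θ))
      (Fin.snoc (Fin.snoc (Fin.snoc xs a) x) y : Fin (n + 2 + 1) → ↥(HZ θ)) ↔ R x y := by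
    intro x y
    rw [BoundedFormula.realize_liftAt (by omega)]
    apply iff_of_eq
    rw [hR]
    congr 1
    funext i
    refine Fin.lastCases ?_ (fun i => Fin.lastCases ?_ (fun i => ?_) i) i
    · simp [Fin.snoc]
    · simp [Fin.snoc]
    · simp [Fin.snoc]
      intro hh
      omega
  have e2 : ∀ b x y : ↥(HZ θ), (φ.liftAt 2 n).Realize (default : Empty → ↥(HZ θ))
      (Fin.snoc (Fin.snoc (Fin.snoc (Fin.snoc xs a) b) x) y : Fin (n + 2 + 2) → ↥(HZ θ)) ↔ R x y := by
    intro b x y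
    rw [BoundedFormula.realize_liftAt (by omega)]
    apply iff_of_eq
    rw [hR]
    congr 1
    funext i
    refine Fin.lastCases ?_ (fun i => Fin.lastCases ?_ (fun i => ?_) i) i
    · simp [Fin.snoc]
    · simp [Fin.snoc]
    · simp [Fin.snoc]
      rw [dif_pos (by omega), dif_pos (by omega)]
      rfl
  intro h
  have h' : ∀ x : ↥(HZ θ), (x : ZFSet.{u}) ∈ (a : ZFSet.{u}) → ∃ y, R x y := by
    intro x hx
    obtain ⟨y, hy⟩ := h x (by simpa [Fin.snoc] using hx)
    exact ⟨y, (e1 x y).1 hy⟩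
  choose! c hc using h'
  obtain ⟨C, hC, hCe⟩ := HZ_of_set (θ := θ)
    (Set.range (fun x : (a : ZFSet.{u}).toSet => (c ⟨x, HZ_trans a.2 x.2⟩ : ZFSet.{u})))
    (by rintro _ ⟨x, rfl⟩; exact (c _).2)
    (Cardinal.mk_range_le.trans_lt (mem_HZ.1 a.2).1)
  refine ⟨⟨C, hC⟩, fun x hx => ⟨c x, ?_, (e2 _ _ _).2 (hc x (by simpa [Fin.snoc] using hx))⟩⟩
  have hx' : (x : ZFSet.{u}) ∈ (a : ZFSet.{u}) := by simpa [Fin.snoc] using hx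
  have : (c x : ZFSet.{u}) ∈ C := by
    rw [← mem_toSet_iff', hCe]
    exact ⟨⟨x, hx'⟩, rfl⟩
  simpa [Fin.snoc] using this

theorem HZ_ZFCminus {θ : ZFSet.{u}} (hθ : (zcard θ).IsRegular)
    (hθ' : Cardinal.aleph0 < zcard θ) : (↥(HZ θ)) ⊨ ZFCminus := by
  rw [Theory.model_iff]
  intro φ hφ
  rcases hφ with (hφ | hφ) | hφ
  · rcases hφ with rfl | rfl | rfl | rfl | rfl | rfl | rfl
    · exact HZ_ext θ
    · exact HZ_emptyAx hθ'.le
    · exact HZ_pairAx hθ'.le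
    · exact HZ_unionAx hθ
    · exact HZ_infAx hθ'
    · exact HZ_foundAx θ
    · exact HZ_choiceAx
  · obtain ⟨n, ψ, rfl⟩ := Set.mem_iUnion.1 hφ
    exact HZ_sepAx n ψ
  · obtain ⟨n, ψ, rfl⟩ := Set.mem_iUnion.1 hφ
    exact HZ_collAx n ψ

instance memRel_countable (n : ℕ) : Countable (memLang.Relations n) := by
  refine ⟨⟨fun _ => 0, ?_⟩⟩
  intro a b _
  have a' : memRelType n := a
  change memRelType n at a
  change memRelType n at b
  cases a; cases b; rfl

instance memFun_empty (n : ℕ) : IsEmpty (memLang.Functions n) :=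
  inferInstanceAs (IsEmpty Empty)

theorem memLang_card : memLang.card ≤ Cardinal.aleph0 := by
  have : Countable memLang.Symbols := by
    unfold Language.Symbols
    infer_instance
  exact Cardinal.mk_le_aleph0_iff.2 this

theorem formulas_card :
    Cardinal.mk (Σ n, memLang.BoundedFormula Empty n) ≤ Cardinal.aleph0 := by
  refine BoundedFormula.card_le.trans ?_
  simp [memLang_card]

/-- The constructors of the closed Skolem hull. -/
abbrev HullIdx (κ : ZFSet.{u}) (X : Set ZFSet.{u}) : Type (u + 1) :=
  ↥X ⊕ (ULift.{u + 1} (Σ n, memLang.BoundedFormula Empty (n + 1)) ⊕ ↥κ.toSet)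

/-- The arities of the constructors of the closed Skolem hull. -/
abbrev HullAr (κ : ZFSet.{u}) (X : Set ZFSet.{u}) : HullIdx κ X → Type (u + 1) :=
  Sum.elim (fun _ => PEmpty)
    (Sum.elim (fun p => ULift.{u + 1} (Fin p.down.1)) (fun δ => ↥(δ : ZFSet.{u}).toSet))

theorem hull_card {κ : ZFSet.{u}} {X : Set ZFSet.{u}} (hκ : IsCardZ κ)
    (hunc : Cardinal.aleph0 < zcard κ) (hlt : (zcard κ) ^< (zcard κ) = zcard κ)
    (hX : Cardinal.mk X ≤ zcard κ) : Cardinal.mk (WType (HullAr κ X)) ≤ zcard κ := by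
  apply WType.cardinalMk_le_of_le
  have h1 : ∀ a : HullIdx κ X, Cardinal.mk (HullAr κ X a) < zcard κ := by
    rintro (x | p | δ)
    · exact (by simpa using Cardinal.aleph0_pos.trans hunc :
        Cardinal.mk PEmpty.{u + 2} < zcard κ)
    · exact lt_trans (Cardinal.mk_lt_aleph0_iff.2 (inferInstanceAs (Finite (ULift (Fin _))))) hunc
    · exact hκ.2 _ δ.2
  have h2 : ∀ a : HullIdx κ X, (zcard κ) ^ Cardinal.mk (HullAr κ X a) ≤ zcard κ := fun a =>
    (Cardinal.le_powerlt (zcard κ) (h1 a)).trans_eq hlt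
  refine (Cardinal.sum_le_sum _ _ h2).trans ?_
  rw [Cardinal.sum_const']
  refine (mul_le_mul' ?_ le_rfl).trans_eq (Cardinal.mul_eq_self hunc.le)
  have h3 : Cardinal.mk (ULift.{u + 1} (Σ n, memLang.BoundedFormula Empty (n + 1))) ≤ zcard κ := by
    rw [Cardinal.mk_uLift]
    refine le_trans ?_ hunc.le
    rw [Cardinal.lift_le_aleph0]
    refine le_trans ?_ formulas_card
    refine Cardinal.mk_le_of_injective
      (f := fun p : (Σ n, memLang.BoundedFormula Empty (n + 1)) =>
        (⟨p.1 + 1, p.2⟩ : Σ n, memLang.BoundedFormula Empty n)) ?_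
    rintro ⟨n, φ⟩ ⟨m, ψ⟩ h
    simp only [Sigma.mk.injEq, add_left_inj] at h
    obtain ⟨rfl, h⟩ := h
    rw [eq_of_heq h]
  rw [Cardinal.mk_sum, Cardinal.mk_sum]
  simp only [Cardinal.lift_id]
  have h4 : Cardinal.mk κ.toSet ≤ zcard κ := le_rfl
  exact Cardinal.add_le_of_le hunc.le hX (Cardinal.add_le_of_le hunc.le h3 h4)

theorem elemSub_of_tarski {S T : Set ZFSet.{u}} (h : S ⊆ T)
    (htv : ∀ (n : ℕ) (φ : memLang.BoundedFormula Empty (n + 1)) (x : Fin n → ↥T) (a : ↥T),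
      (∀ i, (x i : ZFSet.{u}) ∈ S) → φ.Realize default (Fin.snoc x a : _ → ↥T) →
      ∃ b : ↥T, (b : ZFSet.{u}) ∈ S ∧ φ.Realize default (Fin.snoc x b : _ → ↥T)) :
    Nonempty {f : ↥S ↪ₑ[memLang] ↥T // ∀ x, f x = ⟨x, h x.2⟩} := by
  let e : ↥S ↪[memLang] ↥T :=
    { toFun := fun x => ⟨x, h x.2⟩
      inj' := by
        intro a b hab
        apply Subtype.ext
        exact congrArg (fun z : ↥T => (z : ZFSet.{u})) hab
      map_fun' := by
        intro n f
        exact (memFun_empty n).elim f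
      map_rel' := by
        intro n r x
        change memRelType n at r
        cases r
        exact Iff.rfl }
  refine ⟨⟨e.toElementaryEmbedding ?_, fun x => rfl⟩⟩
  intro n φ x a ha
  obtain ⟨b, hb, hb'⟩ := htv n φ (e ∘ x) a (fun i => (x i).2) ha
  exact ⟨⟨b, hb⟩, hb'⟩

theorem elemSub_of_emb {S T : Set ZFSet.{u}} (h : S ⊆ T) (f : ↥S ↪ₑ[memLang] ↥T)
    (hf : ∀ x, f x = ⟨x, h x.2⟩) : ElemSub S T := by
  refine ⟨h, fun n φ x => ?_⟩
  rw [← f.map_boundedFormula]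
  have e1 : (f ∘ Empty.elim : Empty → ↥T) = Empty.elim := funext fun z => z.elim
  have e2 : f ∘ x = fun i => (⟨(x i : ZFSet), h (x i).2⟩ : ↥T) := funext fun i => hf _
  rw [e1, e2]

/-- Existence of `κ`-models elementary in `H(θ)` above a given small set. -/
theorem exists_kappa_model {κ θ : ZFSet.{u}} (hκ : IsCardZ κ)
    (hunc : Cardinal.aleph0 < zcard κ) (hlt : (zcard κ) ^< (zcard κ) = zcard κ)
    (hθ : IsRegCard θ) (hκθ : κ ∈ θ) (X : Set ZFSet.{u}) (hXH : X ⊆ HZ θ)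
    (hX : Cardinal.mk X ≤ zcard κ) :
    ∃ M : Set ZFSet.{u}, X ⊆ M ∧ KappaModelZ κ M ∧ ElemSub M (HZ θ) := by
  classical
  have hκθc : zcard κ < zcard θ := hθ.2.2 κ hκθ
  have hκH : κ ∈ HZ θ := HZ_of_transitive hκ.1.isTransitive hκθc
  have hinf : Cardinal.aleph0 ≤ zcard θ := hunc.le.trans hκθc.le
  -- the starting set
  let Y : Set ZFSet.{u} := X ∪ insert κ κ.toSet
  have hYH : Y ⊆ HZ θ := by
    rintro z (hz | rfl | hz)
    · exact hXH hz
    · exact hκH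
    · exact HZ_trans hκH hz
  have hY : Cardinal.mk Y ≤ zcard κ := by
    refine (Cardinal.mk_union_le _ _).trans (Cardinal.add_le_of_le hunc.le hX ?_)
    refine Cardinal.mk_insert_le.trans (Cardinal.add_le_of_le hunc.le le_rfl ?_)
    exact Cardinal.one_le_aleph0.trans hunc.le
  -- Skolem functions
  have sk : ∀ (n : ℕ) (φ : memLang.BoundedFormula Empty (n + 1)) (x : Fin n → ↥(HZ θ)),
      ∃ b : ↥(HZ θ), (∃ a, φ.Realize (default : Empty → ↥(HZ θ)) (Fin.snoc x a : _ → ↥(HZ θ))) →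
        φ.Realize (default : Empty → ↥(HZ θ)) (Fin.snoc x b : _ → ↥(HZ θ)) := by
    intro n φ x
    by_cases h : ∃ a, φ.Realize (default : Empty → ↥(HZ θ)) (Fin.snoc x a : _ → ↥(HZ θ))
    · obtain ⟨a, ha⟩ := h
      exact ⟨a, fun _ => ha⟩
    · exact ⟨⟨κ, hκH⟩, fun h' => (h h').elim⟩
  choose skf hskf using sk
  -- sequences
  have sq : ∀ (δ : ↥κ.toSet) (g : ↥(δ : ZFSet.{u}).toSet → ↥(HZ θ)),
      ∃ m : ↥(HZ θ), (∃ y, ZFSet.IsFunc (δ : ZFSet.{u}) y m) ∧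
        ∀ b : ↥(δ : ZFSet.{u}).toSet, ∀ v, ZFSet.pair b v ∈ (m : ZFSet.{u}) ↔ v = g b := by
    intro δ g
    obtain ⟨m, hm, ⟨y, hy, -⟩, h⟩ := exists_graph (θ := θ) (d := δ) hinf (HZ_trans hκH δ.2)
      (fun b => if hb : b ∈ (δ : ZFSet.{u}).toSet then (g ⟨b, hb⟩ : ZFSet.{u}) else ∅)
      (by
        intro b hb
        have hb' : b ∈ (δ : ZFSet.{u}).toSet := hb
        simp only [hb', dif_pos]
        exact (g _).2)
    refine ⟨⟨m, hm⟩, ⟨y, hy⟩, fun b v => ?_⟩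
    rw [h]
    have hb' : (b : ZFSet.{u}) ∈ (δ : ZFSet.{u}).toSet := b.2
    have hb'' : (b : ZFSet.{u}) ∈ (δ : ZFSet.{u}) := b.2
    simp only [hb', dif_pos, hb'', true_and]
  choose sqf hsqf1 hsqf2 using sq
  let step : (Σ a : HullIdx κ Y, HullAr κ Y a → ↥(HZ θ)) → ↥(HZ θ) := fun p =>
    match p with
    | ⟨Sum.inl x, _⟩ => ⟨x, hYH x.2⟩
    | ⟨Sum.inr (Sum.inl q), g⟩ => skf q.down.1 q.down.2 (fun i => g ⟨i⟩)
    | ⟨Sum.inr (Sum.inr δ), g⟩ => sqf δ g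
  let ev : WType (HullAr κ Y) → ↥(HZ θ) := WType.elim _ step
  let M : Set ZFSet.{u} := Set.range (fun w => (ev w : ZFSet.{u}))
  have hYM : Y ⊆ M := fun x hx => ⟨WType.mk (Sum.inl ⟨x, hx⟩) (fun e => PEmpty.elim e), rfl⟩
  have hMH : M ⊆ HZ θ := by
    rintro _ ⟨w, rfl⟩
    exact (ev w).2
  have hMc : Cardinal.mk M = zcard κ := by
    apply le_antisymm
    · exact Cardinal.mk_range_le.trans (hull_card hκ hunc hlt hY)
    · exact Cardinal.mk_le_mk_of_subset (fun z hz => hYM (Or.inr (Or.inr hz)))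
  obtain ⟨f, hf⟩ := elemSub_of_tarski hMH (by
    intro n φ x a hx ha
    choose w hw using hx
    have hw' : ∀ i, ev (w i) = x i := fun i => Subtype.ext (hw i)
    refine ⟨skf n φ x, ⟨WType.mk (Sum.inr (Sum.inl ⟨⟨n, φ⟩⟩)) (fun i => w i.down), ?_⟩,
      hskf n φ x ⟨a, ha⟩⟩
    have : x = fun i => ev (w i) := funext fun i => (hw' i).symm
    rw [this]
    rfl)
  refine ⟨M, fun x hx => hYM (Or.inl hx), ⟨⟨hMc, fun x hx => hYM (Or.inr hx), ?_⟩, ?_⟩,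
    elemSub_of_emb hMH f hf⟩
  · exact (f.theory_model_iff _).2 (HZ_ZFCminus hθ.2.1 (hunc.trans hκθc))
  · intro δ y s hδ hy hs
    have : ∀ b : ↥δ.toSet, ∃ w, ZFSet.pair b (ev w : ZFSet.{u}) ∈ s := by
      intro b
      obtain ⟨v, hv, -⟩ := hs.2 b b.2
      obtain ⟨w, hw⟩ := hy (ZFSet.pair_mem_prod.1 (hs.1 hv)).2
      exact ⟨w, by rw [← hw] at hv; exact hv⟩
    choose w hw using this
    refine ⟨WType.mk (Sum.inr (Sum.inr ⟨δ, hδ⟩)) w, ?_⟩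
    show (sqf ⟨δ, hδ⟩ (fun b => ev (w b)) : ZFSet.{u}) = s
    obtain ⟨y', hy'⟩ := hsqf1 ⟨δ, hδ⟩ (fun b => ev (w b))
    refine IsFunc_ext hy' hs ?_
    intro b hb v hv
    have := (hsqf2 ⟨δ, hδ⟩ (fun b => ev (w b)) ⟨b, hb⟩ v).1 hv
    rw [this]
    exact hw ⟨b, hb⟩

/-- Requirements on the model `M` chosen at stage `i` of the auxiliary play. -/
def GoodM (κ θ i : ZFSet.{u}) (X : Set ZFSet.{u}) (g F : ZFSet.{u} → Set ZFSet.{u})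
    (M : Set ZFSet.{u}) : Prop :=
  X ∩ Hplus κ ⊆ M ∧ (∀ j, j ∈ i → g j ⊆ M) ∧ KappaModelZ κ M ∧ ElemSub M (HZ θ) ∧
    (∃ m ∈ M, CodesSetSeq m i g) ∧ (∃ f ∈ M, CodesSetSeq f i (fun b => F b ∩ g b))

theorem exists_codes {κ θ i : ZFSet.{u}} (hinf : Cardinal.aleph0 ≤ zcard θ)
    (hκθ : zcard κ < zcard θ) (hi : i ∈ HZ θ) (g : ZFSet.{u} → Set ZFSet.{u})
    (hg : ∀ j ∈ i, g j ⊆ HZ θ) (hgc : ∀ j ∈ i, Cardinal.mk (g j) ≤ zcard κ) :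
    ∃ m ∈ HZ θ, CodesSetSeq m i g := by
  have : ∀ j, j ∈ i → ∃ x ∈ HZ θ, x.toSet = g j := fun j hj =>
    HZ_of_set (g j) (hg j hj) ((hgc j hj).trans_lt hκθ)
  choose! G hG hG' using this
  obtain ⟨m, hm, ⟨y, hy, -⟩, h⟩ := exists_graph hinf hi G hG
  refine ⟨m, hm, ⟨y, hy⟩, fun b v hb hv => ?_⟩
  rw [((h b v).1 hv).2]
  exact hG' b hb

theorem exists_GoodM {κ θ : ZFSet.{u}} (hκ : IsCardZ κ)
    (hunc : Cardinal.aleph0 < zcard κ) (hlt : (zcard κ) ^< (zcard κ) = zcard κ)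
    (hθ : IsRegCard θ) (hκθ : κ ∈ θ) {i : ZFSet.{u}} (hi : i.IsOrdinal)
    (hic : zcard i ≤ zcard κ) {X : Set ZFSet.{u}} (hX : Cardinal.mk X ≤ zcard κ)
    (g F : ZFSet.{u} → Set ZFSet.{u})
    (hg : ∀ j ∈ i, g j ⊆ HZ θ) (hgc : ∀ j ∈ i, Cardinal.mk (g j) ≤ zcard κ) :
    ∃ M, GoodM κ θ i X g F M := by
  have hκθc : zcard κ < zcard θ := hθ.2.2 κ hκθ
  have hinf : Cardinal.aleph0 ≤ zcard θ := hunc.le.trans hκθc.le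
  have hiH : i ∈ HZ θ := HZ_of_transitive hi.isTransitive (hic.trans_lt hκθc)
  obtain ⟨m, hm, hmc⟩ := exists_codes hinf hκθc hiH g hg hgc
  obtain ⟨f, hf, hfc⟩ := exists_codes hinf hκθc hiH (fun b => F b ∩ g b)
    (fun j hj => Set.inter_subset_right.trans (hg j hj))
    (fun j hj => (Cardinal.mk_le_mk_of_subset Set.inter_subset_right).trans (hgc j hj))
  obtain ⟨M, hM, hMκ, hMe⟩ := exists_kappa_model hκ hunc hlt hθ hκθ
    ((X ∩ Hplus κ) ∪ ((⋃ j : i.toSet, g j) ∪ {m, f}))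
    (by
      rintro z (hz | hz | hz)
      · exact Hplus_subset_HZ hκθc hz.2
      · obtain ⟨j, hj⟩ := Set.mem_iUnion.1 hz
        exact hg j j.2 hj
      · rcases hz with rfl | rfl
        · exact hm
        · exact hf)
    (by
      refine (Cardinal.mk_union_le _ _).trans (Cardinal.add_le_of_le hunc.le
        ((Cardinal.mk_le_mk_of_subset Set.inter_subset_left).trans hX) ?_)
      refine (Cardinal.mk_union_le _ _).trans (Cardinal.add_le_of_le hunc.le ?_ ?_)
      · refine (Cardinal.mk_iUnion_le _).trans ?_
        refine (mul_le_mul' hic (ciSup_le' fun j : i.toSet => hgc (j : ZFSet.{u}) j.2)).trans_eq ?_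
        exact Cardinal.mul_eq_self hunc.le
      · exact (Cardinal.mk_lt_aleph0_iff.2 (Set.toFinite _).to_subtype).le.trans hunc.le)
  refine ⟨M, fun x hx => hM (Or.inl hx), fun j hj x hx => hM (Or.inr (Or.inl ?_)), hMκ, hMe,
    ⟨m, hM (Or.inr (Or.inr (Or.inl rfl))), hmc⟩, ⟨f, hM (Or.inr (Or.inr (Or.inr rfl))), hfc⟩⟩
  exact Set.mem_iUnion.2 ⟨⟨j, hj⟩, hx⟩

open Classical in
/-- The auxiliary sequence of models in `H(θ)`, covering the models `N i`. -/
noncomputable def starSeq (κ θ : ZFSet.{u}) (N : ZFSet.{u} → Set ZFSet.{u})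
    (T : ZFSet.{u} → (ZFSet.{u} → Set ZFSet.{u}) → Set ZFSet.{u}) : ZFSet.{u} → Set ZFSet.{u} :=
  ZFSet.mem_wf.fix (C := fun _ => Set ZFSet.{u}) (fun i rec =>
    Classical.epsilon (GoodM κ θ i (N i) (fun b => if h : b ∈ i then rec b h else ∅)
      (fun j => T j (restrLe (fun b => if h : b ∈ i then rec b h else ∅) j))))

theorem star_eq (κ θ : ZFSet.{u}) (N : ZFSet.{u} → Set ZFSet.{u})
    (T : ZFSet.{u} → (ZFSet.{u} → Set ZFSet.{u}) → Set ZFSet.{u}) (i : ZFSet.{u}) :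
    starSeq κ θ N T i = Classical.epsilon (GoodM κ θ i (N i) (restrLt (starSeq κ θ N T) i)
      (fun j => T j (restrLe (restrLt (starSeq κ θ N T) i) j))) := by
  rw [starSeq, WellFounded.fix_eq]
  rfl

theorem restrLt_of_mem {g : ZFSet.{u} → Set ZFSet.{u}} {i b : ZFSet.{u}} (h : b ∈ i) :
    restrLt g i b = g b := if_pos h

theorem restrLe_of_mem {g : ZFSet.{u} → Set ZFSet.{u}} {i b : ZFSet.{u}} (h : b ∈ i ∨ b = i) :
    restrLe g i b = g b := if_pos h

theorem restrLe_congr {g g' : ZFSet.{u} → Set ZFSet.{u}} {i : ZFSet.{u}}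
    (h : ∀ b, b ∈ i ∨ b = i → g b = g' b) : restrLe g i = restrLe g' i := by
  funext b
  unfold restrLe
  split_ifs with hb
  · exact h b hb
  · rfl

theorem restrLt_congr {g g' : ZFSet.{u} → Set ZFSet.{u}} {i : ZFSet.{u}}
    (h : ∀ b, b ∈ i → g b = g' b) : restrLt g i = restrLt g' i := by
  funext b
  unfold restrLt
  split_ifs with hb
  · exact h b hb
  · rfl

theorem GoodM_congr {κ θ i : ZFSet.{u}} {X : Set ZFSet.{u}} {g g' F F' : ZFSet.{u} → Set ZFSet.{u}}
    {M : Set ZFSet.{u}} (hg : ∀ b ∈ i, g b = g' b) (hF : ∀ b ∈ i, F b = F' b)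
    (h : GoodM κ θ i X g F M) : GoodM κ θ i X g' F' M := by
  obtain ⟨h1, h2, h3, h4, ⟨m, hm, hm'⟩, ⟨f, hf, hf'⟩⟩ := h
  refine ⟨h1, fun j hj => hg j hj ▸ h2 j hj, h3, h4, ⟨m, hm, hm'.1, fun b v hb hv => ?_⟩,
    ⟨f, hf, hf'.1, fun b v hb hv => ?_⟩⟩
  · rw [← hg b hb]; exact hm'.2 b v hb hv
  · show _ = F' b ∩ g' b
    rw [← hg b hb, ← hF b hb]; exact hf'.2 b v hb hv

theorem ChalLegal_congr {κ θ i : ZFSet.{u}} {g g' F F' : ZFSet.{u} → Set ZFSet.{u}}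
    (hg : ∀ b, b ∈ i ∨ b = i → g b = g' b) (hF : ∀ b ∈ i, F b = F' b)
    (h : ChalLegalAt κ θ g F i) : ChalLegalAt κ θ g' F' i := by
  have h' : GoodM κ θ i ∅ g F (g i) := ⟨by simp, h⟩
  have := (GoodM_congr (fun b hb => hg b (Or.inl hb)) hF h').2
  rw [hg i (Or.inr rfl)] at this
  exact this

theorem star_congr {κ θ : ZFSet.{u}} {N N' : ZFSet.{u} → Set ZFSet.{u}}
    {T T' : ZFSet.{u} → (ZFSet.{u} → Set ZFSet.{u}) → Set ZFSet.{u}} {i : ZFSet.{u}}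
    (hi : i.IsTransitive) (hN : ∀ b, b ∈ i ∨ b = i → N b = N' b) (hT : ∀ b ∈ i, T b = T' b)
    (c : ZFSet.{u}) (hc : c ∈ i ∨ c = i) : starSeq κ θ N T c = starSeq κ θ N' T' c := by
  induction c using ZFSet.inductionOn with
  | _ c ih =>
    have hsub : ∀ b ∈ c, b ∈ i := by
      intro b hb
      rcases hc with hc | rfl
      · exact hi c hc hb
      · exact hb
    have h1 : restrLt (starSeq κ θ N T) c = restrLt (starSeq κ θ N' T') c :=
      restrLt_congr fun b hb => ih b hb (Or.inl (hsub b hb))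
    rw [star_eq, star_eq κ θ N', h1, hN c hc]
    congr 1
    funext M
    apply propext
    have hF : ∀ b ∈ c, T b (restrLe (restrLt (starSeq κ θ N' T') c) b) =
        T' b (restrLe (restrLt (starSeq κ θ N' T') c) b) := by
      intro b hb
      rw [hT b (hsub b hb)]
    exact ⟨GoodM_congr (fun _ _ => rfl) hF, GoodM_congr (fun _ _ => rfl) fun b hb => (hF b hb).symm⟩

theorem star_spec {κ θ : ZFSet.{u}} (hκ : IsCardZ κ)
    (hunc : Cardinal.aleph0 < zcard κ) (hlt : (zcard κ) ^< (zcard κ) = zcard κ)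
    (hθ : IsRegCard θ) (hκθ : κ ∈ θ) (N : ZFSet.{u} → Set ZFSet.{u})
    (T : ZFSet.{u} → (ZFSet.{u} → Set ZFSet.{u}) → Set ZFSet.{u}) (i : ZFSet.{u})
    (hi : i.IsOrdinal) (hic : zcard i ≤ zcard κ)
    (hN : ∀ j, j ∈ i ∨ j = i → Cardinal.mk (N j) ≤ zcard κ) :
    N i ∩ Hplus κ ⊆ starSeq κ θ N T i ∧
      ChalLegalAt κ θ (starSeq κ θ N T) (fun j => T j (restrLe (starSeq κ θ N T) j)) i := by
  induction i using ZFSet.inductionOn with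
  | _ i ih =>
    have ih' : ∀ j ∈ i, ChalLegalAt κ θ (starSeq κ θ N T)
        (fun j => T j (restrLe (starSeq κ θ N T) j)) j := by
      intro j hj
      refine (ih j hj (hi.mem hj) ((zcard_mono (hi.isTransitive j hj)).trans hic) ?_).2
      rintro k (hk | rfl)
      · exact hN k (Or.inl (hi.isTransitive j hj hk))
      · exact hN k (Or.inl hj)
    have hex : ∃ M, GoodM κ θ i (N i) (restrLt (starSeq κ θ N T) i)
        (fun j => T j (restrLe (restrLt (starSeq κ θ N T) i) j)) M := by
      apply exists_GoodM hκ hunc hlt hθ hκθ hi hic (hN i (Or.inr rfl))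
      · intro j hj
        rw [restrLt_of_mem hj]
        exact (ih' j hj).2.2.1.1
      · intro j hj
        rw [restrLt_of_mem hj]
        exact (ih' j hj).2.1.1.1.le
    have hsp := Classical.epsilon_spec hex
    rw [← star_eq] at hsp
    refine GoodM_congr (fun b hb => restrLt_of_mem hb) (fun b hb => ?_) hsp
    show T b _ = T b _
    congr 1
    apply restrLe_congr
    rintro c (hc | rfl)
    · exact restrLt_of_mem (hi.isTransitive b hb hc)
    · exact restrLt_of_mem hb

theorem JudgeWins_transfer {κ γ : ZFSet.{u}} {Ms Ms' Fs Fs' : ZFSet.{u} → Set ZFSet.{u}}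
    (hκ : IsCardZ κ) (hunc : Cardinal.aleph0 < zcard κ)
    (hM : ∀ i ∈ γ, Ms i ∩ Hplus κ ⊆ Ms' i) (hF : ∀ i ∈ γ, Fs i = Fs' i)
    (h : JudgeWinsRun κ γ Ms' Fs') : JudgeWinsRun κ γ Ms Fs := by
  unfold JudgeWinsRun at *
  have e : (⋃ i ∈ γ.toSet, Fs i) = ⋃ i ∈ γ.toSet, Fs' i :=
    Set.iUnion₂_congr fun i hi => hF i hi
  rw [e]
  refine MNormalZ_transfer hκ hunc ?_ h
  rintro x ⟨hx, hxH⟩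
  obtain ⟨i, hi, hxi⟩ := Set.mem_iUnion₂.1 hx
  exact Set.mem_iUnion₂.2 ⟨i, hi, hM i hi ⟨hxi, hxH⟩⟩

theorem chal_direction {κ γ θ₀ θ₁ : ZFSet.{u}}
    (hκ : IsCardZ κ) (hunc : Cardinal.aleph0 < zcard κ)
    (hlt : (zcard κ) ^< (zcard κ) = zcard κ) (hγ : γ.IsOrdinal)
    (h1 : IsRegCard θ₁) (h1κ : κ ∈ θ₁) (h : ∃ σ, ChalWS κ θ₀ γ σ) : ∃ σ, ChalWS κ θ₁ γ σ := by
  obtain ⟨σ, hσ⟩ := h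
  refine ⟨fun i F => starSeq κ θ₁ (fun b => σ b (restrLt F b)) (fun j _ => F j) i, fun Fs => ?_⟩
  obtain ⟨hσ1, hσ2⟩ := hσ Fs
  set N : ZFSet.{u} → Set ZFSet.{u} := fun b => σ b (restrLt Fs b) with hNdef
  set S : ZFSet.{u} → Set ZFSet.{u} := starSeq κ θ₁ N (fun j _ => Fs j) with hSdef
  have hS : ∀ i ∈ γ, S i = starSeq κ θ₁ (fun b => σ b (restrLt (restrLt Fs i) b))
      (fun j _ => restrLt Fs i j) i := by
    intro i hi
    have ht := (hγ.mem hi).isTransitive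
    refine star_congr ht ?_ ?_ i (Or.inr rfl)
    · intro b hb
      show σ b _ = σ b _
      congr 1
      apply restrLt_congr
      intro c hc
      rcases hb with hb | rfl
      · exact (restrLt_of_mem (ht b hb hc)).symm
      · exact (restrLt_of_mem hc).symm
    · intro b hb
      funext _
      exact (restrLt_of_mem hb).symm
  set Ms' : ZFSet.{u} → Set ZFSet.{u} := fun i =>
    starSeq κ θ₁ (fun b => σ b (restrLt (restrLt Fs i) b)) (fun j _ => restrLt Fs i j) i with hMs'
  have hS' : ∀ i ∈ γ, S i = Ms' i := hS
  -- coverage from legality of the simulated play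
  have cov : ∀ i ∈ γ, (∀ j, j ∈ i ∨ j = i → ChalLegalAt κ θ₀ N Fs j) →
      N i ∩ Hplus κ ⊆ S i ∧ ChalLegalAt κ θ₁ S Fs i := by
    intro i hi hl
    exact star_spec hκ hunc hlt h1 h1κ N (fun j _ => Fs j) i (hγ.mem hi)
      (zcard_le_of_legal hl) (fun j hj => (hl j hj).2.1.1.1.le)
  have claim : ∀ i, i ∈ γ → (∀ j, j ∈ i → JudgeLegalAt κ Ms' Fs j) →
      ∀ j, j ∈ i ∨ j = i → ChalLegalAt κ θ₀ N Fs j := by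
    intro i hi hJ j
    induction j using ZFSet.inductionOn with
    | _ j ih =>
      intro hj
      have hjγ : j ∈ γ := by
        rcases hj with hj | rfl
        · exact hγ.isTransitive i hi hj
        · exact hi
      have hji : ∀ k ∈ j, k ∈ i := by
        intro k hk
        rcases hj with hj | rfl
        · exact (hγ.mem hi).isTransitive j hj hk
        · exact hk
      refine hσ1 j hjγ fun k hk => ?_
      have hkγ : k ∈ γ := hγ.isTransitive j hjγ hk
      have hc := (cov k hkγ (by
        rintro l (hl | rfl)
        · have hlj : l ∈ j := (hγ.mem hjγ).isTransitive k hk hl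
          exact ih l hlj (Or.inl (hji l hlj))
        · exact ih l hk (Or.inl (hji l hk)))).1
      rw [hS' k hkγ] at hc
      exact JudgeLegal_transfer hκ hc (fun _ _ => rfl) (hJ k (hji k hk))
  constructor
  · intro i hi hJ
    have := (cov i hi (claim i hi hJ)).2
    refine ChalLegal_congr ?_ (fun _ _ => rfl) this
    rintro b (hb | rfl)
    · exact hS' b (hγ.isTransitive i hi hb)
    · exact hS' b hi
  · intro hJ hW
    have hcov : ∀ i ∈ γ, N i ∩ Hplus κ ⊆ Ms' i := by
      intro i hi
      rw [← hS' i hi]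
      exact (cov i hi (claim i hi fun j hj => hJ j (hγ.isTransitive i hi hj))).1
    refine hσ2 (fun i hi => ?_) (JudgeWins_transfer hκ hunc hcov (fun _ _ => rfl) hW)
    exact JudgeLegal_transfer hκ (hcov i hi) (fun _ _ => rfl) (hJ i hi)

theorem judge_direction {κ γ θ₀ θ₁ : ZFSet.{u}}
    (hκ : IsCardZ κ) (hunc : Cardinal.aleph0 < zcard κ)
    (hlt : (zcard κ) ^< (zcard κ) = zcard κ) (hγ : γ.IsOrdinal)
    (h0 : IsRegCard θ₀) (h0κ : κ ∈ θ₀) (h : ∃ τ, JudgeWS κ θ₀ γ τ) : ∃ τ, JudgeWS κ θ₁ γ τ := by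
  obtain ⟨τ, hτ⟩ := h
  refine ⟨fun i M => τ i (restrLe (starSeq κ θ₀ M τ) i), fun Ms => ?_⟩
  obtain ⟨hτ1, hτ2⟩ := hτ (starSeq κ θ₀ Ms τ)
  set S : ZFSet.{u} → Set ZFSet.{u} := starSeq κ θ₀ Ms τ with hSdef
  set Fs' : ZFSet.{u} → Set ZFSet.{u} :=
    fun b => τ b (restrLe (starSeq κ θ₀ (restrLe Ms b) τ) b) with hFs'
  have hF : ∀ i ∈ γ, Fs' i = τ i (restrLe S i) := by
    intro i hi
    have ht := (hγ.mem hi).isTransitive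
    show τ i _ = τ i _
    congr 1
    apply restrLe_congr
    intro b hb
    exact star_congr ht (fun c hc => restrLe_of_mem hc) (fun _ _ => rfl) b hb
  have cov : ∀ i ∈ γ, (∀ j, j ∈ i ∨ j = i → ChalLegalAt κ θ₁ Ms Fs' j) →
      Ms i ∩ Hplus κ ⊆ S i ∧ ChalLegalAt κ θ₀ S (fun j => τ j (restrLe S j)) i := by
    intro i hi hl
    exact star_spec hκ hunc hlt h0 h0κ Ms τ i (hγ.mem hi)
      (zcard_le_of_legal hl) (fun j hj => (hl j hj).2.1.1.1.le)
  constructor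
  · intro i hi hl
    refine JudgeLegal_transfer hκ (cov i hi hl).1 ?_ (hτ1 i hi fun j hj => ?_)
    · rintro j (hj | rfl)
      · exact hF j (hγ.isTransitive i hi hj)
      · exact hF j hi
    · rcases hj with hj | rfl
      · refine (cov j (hγ.isTransitive i hi hj) ?_).2
        rintro k (hk | rfl)
        · exact hl k (Or.inl ((hγ.mem hi).isTransitive j hj hk))
        · exact hl k (Or.inl hj)
      · exact (cov j hi hl).2
  · intro hl
    have hcov := fun i (hi : i ∈ γ) => cov i hi (by
      rintro j (hj | rfl)
      · exact hl j (hγ.isTransitive i hi hj)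
      · exact hl j hi)
    exact JudgeWins_transfer hκ hunc (fun i hi => (hcov i hi).1) hF
      (hτ2 fun i hi => (hcov i hi).2)

/-- **Lemma 3.2** (Holy–Schlicht). For an uncountable cardinal `κ = κ^{<κ}`, an ordinal
`γ ≤ κ⁺` and regular cardinals `θ₀, θ₁ > κ`, the challenger has a winning strategy in
`G_γ^{θ₀}(κ)` iff he has one in `G_γ^{θ₁}(κ)`, and likewise for the judge.  Hence the
(strategic) `γ`-filter property does not depend on the choice of `θ`. -/
theorem filter_game_theta_independent (κ γ θ₀ θ₁ : ZFSet.{u})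
    (hκ : IsCardZ κ) (hunc : Cardinal.aleph0 < zcard κ)
    (hlt : (zcard κ) ^< (zcard κ) = zcard κ)
    (hγ : γ.IsOrdinal) (hγle : zcard γ ≤ Order.succ (zcard κ))
    (h0 : IsRegCard θ₀) (h0κ : κ ∈ θ₀)
    (h1 : IsRegCard θ₁) (h1κ : κ ∈ θ₁) :
    ((∃ σ, ChalWS κ θ₀ γ σ) ↔ (∃ σ, ChalWS κ θ₁ γ σ)) ∧
    ((∃ τ, JudgeWS κ θ₀ γ τ) ↔ (∃ τ, JudgeWS κ θ₁ γ τ)) := by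
  exact ⟨⟨chal_direction hκ hunc hlt hγ h1 h1κ, chal_direction hκ hunc hlt hγ h0 h0κ⟩,
    ⟨judge_direction hκ hunc hlt hγ h0 h0κ, judge_direction hκ hunc hlt hγ h1 h1κ⟩⟩
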